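/- Suppose 1/3 < α ≤ 1 and let Δ be the maximum degree of G. Let T ⊆ S ⊆ V with |S| = k, let v ∈ S∖T, and let B ⊆ V∖(T ∪ {v}) be a set of vertices such that contribution(b, T) ≥ contribution(v, T) for every b ∈ B and |B| ≥ (Δ+1)·(k−1) + 1. Then there exists a vertex v' ∈ B∖S such that val((S∖{v}) ∪ {v'}) ≥ val(S). -/

import Mathlib

open Finset

variable {V : Type*} [Fintype V] [DecidableEq V]

/-- Number of edges of `G` with both endpoints in `S`. -/
def mIn (G : SimpleGraph V) [DecidableRel G.Adj] (S : Finset V) : ℕ :=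
  (G.edgeFinset.filter (fun e => ∀ v ∈ e, v ∈ S)).card

/-- Number of edges of `G` with exactly one endpoint in `S`. -/
def mCut (G : SimpleGraph V) [DecidableRel G.Adj] (S : Finset V) : ℕ :=
  (G.edgeFinset.filter (fun e => (∃ v ∈ e, v ∈ S) ∧ ∃ v ∈ e, v ∉ S)).card

/-- `val(S) = α·(m(S, V∖S) + counter(S)) + (1−α)·m(S)`. -/
noncomputable def val (G : SimpleGraph V) [DecidableRel G.Adj] (counter : V → ℕ) (α : ℝ)
    (S : Finset V) : ℝ :=
  α * ((mCut G S : ℝ) + ∑ v ∈ S, (counter v : ℝ)) + (1 - α) * (mIn G S : ℝ)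

/-- `degc(v) = deg(v) + counter(v)`. -/
def degc (G : SimpleGraph V) [DecidableRel G.Adj] (counter : V → ℕ) (v : V) : ℕ :=
  G.degree v + counter v

/-- `contribution(v, T) = α·degc(v) + (1−3α)·|N(v) ∩ T|`. -/
noncomputable def contribution (G : SimpleGraph V) [DecidableRel G.Adj] (counter : V → ℕ)
    (α : ℝ) (v : V) (T : Finset V) : ℝ :=
  α * (degc G counter v : ℝ) + (1 - 3 * α) * ((G.neighborFinset v ∩ T).card : ℝ)

/-- Edges from `x` into `A` correspond to neighbors of `x` in `A`. -/
lemma card_edges_into (G : SimpleGraph V) [DecidableRel G.Adj] (x : V) (A : Finset V)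
    (hx : x ∉ A) :
    (G.edgeFinset.filter (fun e => x ∈ e ∧ ∃ a ∈ e, a ∈ A)).card
      = (G.neighborFinset x ∩ A).card := by
  symm
  apply Finset.card_bij (fun a _ => s(x, a))
  · intro a ha
    simp only [mem_inter, SimpleGraph.mem_neighborFinset] at ha
    simp only [mem_filter, SimpleGraph.mem_edgeFinset, SimpleGraph.mem_edgeSet]
    exact ⟨ha.1, by simp, a, by simp, ha.2⟩
  · intro a _ b _ hab
    exact Sym2.congr_right.1 hab
  · intro e he
    simp only [mem_filter, SimpleGraph.mem_edgeFinset] at he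
    obtain ⟨he, hxe, a, hae, haA⟩ := he
    have hne : x ≠ a := fun h => hx (h ▸ haA)
    have h : e = s(x, a) := (Sym2.mem_and_mem_iff hne).1 ⟨hxe, hae⟩
    subst h
    exact ⟨a, by simpa [haA] using he, rfl⟩

lemma card_edges_at (G : SimpleGraph V) [DecidableRel G.Adj] (x : V) :
    (G.edgeFinset.filter (fun e => x ∈ e)).card = G.degree x := by
  rw [← G.card_incidenceFinset_eq_degree, G.incidenceFinset_eq_filter]

lemma mIn_insert (G : SimpleGraph V) [DecidableRel G.Adj] (x : V) (A : Finset V)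
    (hx : x ∉ A) :
    mIn G (insert x A) = mIn G A + (G.neighborFinset x ∩ A).card := by
  rw [← card_edges_into G x A hx]
  unfold mIn
  simp only [Finset.card_filter]
  rw [← Finset.sum_add_distrib]
  apply Finset.sum_congr rfl
  intro e he
  induction e using Sym2.ind with
  | _ a b =>
    have hab : a ≠ b := by
      have h : G.Adj a b := by simpa using he
      exact h.ne
    simp only [Sym2.mem_iff, forall_eq_or_imp, forall_eq, exists_eq_or_imp, exists_eq_left,
      mem_insert]
    grind

lemma mCut_insert (G : SimpleGraph V) [DecidableRel G.Adj] (x : V) (A : Finset V)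
    (hx : x ∉ A) :
    mCut G (insert x A) + 2 * (G.neighborFinset x ∩ A).card = mCut G A + G.degree x := by
  rw [← card_edges_into G x A hx, ← card_edges_at G x]
  unfold mCut
  simp only [Finset.card_filter]
  rw [Finset.mul_sum, ← Finset.sum_add_distrib, ← Finset.sum_add_distrib]
  apply Finset.sum_congr rfl
  intro e he
  induction e using Sym2.ind with
  | _ a b =>
    have hab : a ≠ b := by
      have h : G.Adj a b := by simpa using he
      exact h.ne
    simp only [Sym2.mem_iff, exists_eq_or_imp, exists_eq_left, mem_insert]
    grind

lemma val_insert (G : SimpleGraph V) [DecidableRel G.Adj] (counter : V → ℕ) (α : ℝ)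
    (x : V) (A : Finset V) (hx : x ∉ A) :
    val G counter α (insert x A) = val G counter α A + contribution G counter α x A := by
  have h1 : (mCut G (insert x A) : ℝ) + 2 * ((G.neighborFinset x ∩ A).card : ℝ)
      = mCut G A + G.degree x := by exact_mod_cast mCut_insert G x A hx
  have h2 : (mCut G (insert x A) : ℝ)
      = mCut G A + G.degree x - 2 * ((G.neighborFinset x ∩ A).card : ℝ) := by linarith
  unfold _root_.val contribution degc
  rw [mIn_insert G x A hx, h2, Finset.sum_insert hx]
  push_cast
  ring

/-- If there are at least `(Δ+1)(k−1)+1` vertices outside `T ∪ {v}` that are better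
than `v ∈ S ∖ T` w.r.t. `T` (for `1/3 < α ≤ 1`), then `v` can be exchanged with one
of them without decreasing `val`. -/
theorem exchange_better_maxDegree (G : SimpleGraph V) [DecidableRel G.Adj]
    (counter : V → ℕ) (α : ℝ) (hα1 : 1 / 3 < α) (hα2 : α ≤ 1)
    (k : ℕ) (T S : Finset V) (hTS : T ⊆ S) (hScard : S.card = k)
    (v : V) (hvS : v ∈ S) (hvT : v ∉ T)
    (B : Finset V) (hB : Disjoint B (insert v T))
    (hBbetter : ∀ b ∈ B, contribution G counter α b T ≥ contribution G counter α v T)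
    (hBcard : (G.maxDegree + 1) * (k - 1) + 1 ≤ B.card) :
    ∃ v' ∈ B, v' ∉ S ∧
      val G counter α (insert v' (S.erase v)) ≥ val G counter α S := by
  set A := S.erase v with hA
  have hvA : v ∉ A := by simp [hA]
  have hTA : T ⊆ A := fun t ht => mem_erase.2 ⟨fun h => hvT (h ▸ ht), hTS ht⟩
  have hAcard : A.card = k - 1 := by rw [hA, card_erase_of_mem hvS, hScard]
  have hcard : (A.biUnion (fun a => insert a (G.neighborFinset a))).card < B.card := by
    have h : (A.biUnion (fun a => insert a (G.neighborFinset a))).card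
        ≤ A.card * (G.maxDegree + 1) := by
      apply Finset.card_biUnion_le_card_mul
      intro a _
      refine (card_insert_le _ _).trans ?_
      rw [G.card_neighborFinset_eq_degree]
      exact Nat.add_le_add_right (G.degree_le_maxDegree a) 1
    rw [hAcard, mul_comm] at h
    omega
  obtain ⟨b, hbB, hb⟩ := Finset.exists_mem_notMem_of_card_lt_card hcard
  simp only [mem_biUnion, mem_insert, SimpleGraph.mem_neighborFinset, not_exists, not_and,
    not_or] at hb
  have hbv : b ≠ v := by
    rintro rfl
    exact Finset.disjoint_left.1 hB hbB (mem_insert_self _ _)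
  have hbA : b ∉ A := fun h => (hb b h).1 rfl
  have hbS : b ∉ S := fun h => hbA (mem_erase.2 ⟨hbv, h⟩)
  refine ⟨b, hbB, hbS, ?_⟩
  have hNA : G.neighborFinset b ∩ A = ∅ := by
    ext a
    simp only [mem_inter, SimpleGraph.mem_neighborFinset, notMem_empty, iff_false, not_and]
    exact fun h ha => (hb a ha).2 h.symm
  have hNT : G.neighborFinset b ∩ T = ∅ :=
    Finset.subset_empty.1 (hNA ▸ Finset.inter_subset_inter_left hTA)
  have hS : val G counter α S = val G counter α A + contribution G counter α v A := by
    rw [← val_insert G counter α v A hvA, hA, insert_erase hvS]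
  rw [hS, val_insert G counter α b A hbA]
  have h1 := hBbetter b hbB
  have h2 : contribution G counter α b A = contribution G counter α b T := by
    unfold contribution
    rw [hNA, hNT]
  have h3 : contribution G counter α v A ≤ contribution G counter α v T := by
    unfold contribution
    have hle : ((G.neighborFinset v ∩ T).card : ℝ) ≤ ((G.neighborFinset v ∩ A).card : ℝ) := by
      exact_mod_cast card_le_card (Finset.inter_subset_inter_left hTA)
    have := mul_le_mul_of_nonpos_left hle (by linarith : 1 - 3 * α ≤ 0)
    linarith
  linarith
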